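/- For every n ∈ ℕ and 0 < ε < π/2, there exists L_N = L_N(n, ε) ∈ ℕ such that in every n-dimensional real normed space (X, ‖·‖), every point p has the following property: for any points y₁, …, y_{L_N} ∈ X∖{p}, there exist i ≠ j such that the minimum over points x on the line segment from p to yⱼ of ‖yᵢ − x‖ is at most β(ε)·‖p − yᵢ‖. In particular, every n-dimensional normed space is globally ATB(ε) with constant L_N. -/

import Mathlib

/-- The constant `β(ε) = (1 - cos ε) sin ε / (2 (1 + sin ε))`. -/
noncomputable def beta (ε : ℝ) : ℝ :=
  (1 - Real.cos ε) * Real.sin ε / (2 * (1 + Real.sin ε))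

/-- The Euclidean comparison angle `∠̃ x p y`. -/
noncomputable def compAngle {X : Type*} [MetricSpace X] (p x y : X) : ℝ :=
  Real.arccos ((dist x p ^ 2 + dist y p ^ 2 - dist x y ^ 2) / (2 * dist x p * dist y p))

/-!
Choose `β > 0` and look at the directions `(yᵢ - p) / ‖yᵢ - p‖` in the unit sphere. By comparison of
volumes, more than `(1 + 2 / β) ^ n` unit vectors contain two at distance less than `β`, and this
bound does not depend on the norm. If `yᵢ` is the nearer to `p` of the two corresponding points, the
point at distance `‖yᵢ - p‖` from `p` on the ray towards `yⱼ` lies on the segment and is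
`β ‖yᵢ - p‖`-close to `yᵢ`.

The angle bound is a consequence valid in every metric space: if `z` lies metrically between `p` and
`y` and `d(x, z) ≤ β d(x, p)`, then `d(x, y) ≤ d(p, y) - (1 - 2β) d(x, p)`, which forces the cosine
of the comparison angle at `p` to be at least `1 - 2β`; and `2 β(ε) < 1 - cos ε`.
-/

section Packing

open Metric MeasureTheory Module

variable {ι E : Type*} [Fintype ι] [NormedAddCommGroup E] [NormedSpace ℝ E]
  [FiniteDimensional ℝ E]

theorem card_mul_pow_finrank_le_of_disjoint_balls {c : E} {δ R : ℝ} (hδ : 0 < δ) (hR : 0 < R)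
    {u : ι → E} (hsub : ∀ i, ball (u i) δ ⊆ ball c R)
    (hdisj : Pairwise fun i j => Disjoint (ball (u i) δ) (ball (u j) δ)) :
    Fintype.card ι * δ ^ finrank ℝ E ≤ R ^ finrank ℝ E := by
  borelize E
  let μ : Measure E := Measure.addHaar
  have real_ball (x : E) {r : ℝ} (hr : 0 < r) :
      μ.real (ball x r) = r ^ finrank ℝ E * μ.real (ball 0 1) := by
    rw [measureReal_def, μ.addHaar_ball_of_pos x hr, ENNReal.toReal_mul,
      ENNReal.toReal_ofReal (by positivity), measureReal_def]
  have unit_ball_pos : 0 < μ.real (ball 0 1) :=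
    ENNReal.toReal_pos (measure_ball_pos μ _ one_pos).ne' measure_ball_lt_top.ne
  refine le_of_mul_le_mul_right ?_ unit_ball_pos
  calc Fintype.card ι * δ ^ finrank ℝ E * μ.real (ball 0 1)
      = ∑ i, μ.real (ball (u i) δ) := by
        simp only [real_ball _ hδ, Finset.sum_const, Finset.card_univ, nsmul_eq_mul, mul_assoc]
    _ = μ.real (⋃ i, ball (u i) δ) :=
        (measureReal_iUnion_fintype hdisj (fun _ => measurableSet_ball)).symm
    _ ≤ μ.real (ball c R) := measureReal_mono (Set.iUnion_subset hsub) measure_ball_lt_top.ne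
    _ = R ^ finrank ℝ E * μ.real (ball 0 1) := real_ball c hR

theorem card_le_pow_finrank_of_separated {c : E} {δ r : ℝ} (hδ : 0 < δ) (hr : 0 ≤ r) {u : ι → E}
    (hu : ∀ i, u i ∈ closedBall c r) (hsep : Pairwise fun i j => δ ≤ dist (u i) (u j)) :
    (Fintype.card ι : ℝ) ≤ (1 + 2 * r / δ) ^ finrank ℝ E := by
  have hsub (i : ι) : ball (u i) (δ / 2) ⊆ ball c (δ / 2 + r) :=
    ball_subset_ball' (add_le_add_right (mem_closedBall.1 (hu i)) _)
  have hdisj : Pairwise fun i j => Disjoint (ball (u i) (δ / 2)) (ball (u j) (δ / 2)) :=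
    fun i j hij => ball_disjoint_ball ((add_halves δ).trans_le (hsep hij))
  have hvol := card_mul_pow_finrank_le_of_disjoint_balls (half_pos hδ) (by positivity) hsub hdisj
  have hratio : 1 + 2 * r / δ = (δ / 2 + r) / (δ / 2) := by
    field
  rwa [hratio, div_pow, le_div_iff₀ (by positivity)]

end Packing

section Segment

open Metric Module

variable {E : Type*} [NormedAddCommGroup E] [NormedSpace ℝ E]

theorem exists_norm_sub_segment_eq_mul_dist_normalize {p x y : E} (h : ‖x - p‖ ≤ ‖y - p‖) :
    ∃ t ∈ Set.Icc (0 : ℝ) 1, ‖x - ((1 - t) • p + t • y)‖ =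
      dist (NormedSpace.normalize (x - p)) (NormedSpace.normalize (y - p)) * ‖p - x‖ := by
  refine ⟨‖x - p‖ / ‖y - p‖, ⟨by positivity, div_le_one_of_le₀ h (norm_nonneg _)⟩, ?_⟩
  have hsub : x - ((1 - ‖x - p‖ / ‖y - p‖) • p + (‖x - p‖ / ‖y - p‖) • y) =
      ‖x - p‖ • (NormedSpace.normalize (x - p) - NormedSpace.normalize (y - p)) := by
    rw [smul_sub, NormedSpace.norm_smul_normalize, NormedSpace.normalize, smul_smul, div_eq_mul_inv]
    module
  rw [hsub, norm_smul, norm_norm, dist_eq_norm, norm_sub_rev p x, mul_comm]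

theorem exists_ne_norm_sub_segment_le {ι : Type*} [Fintype ι] [FiniteDimensional ℝ E] {β : ℝ}
    (hβ : 0 < β) (hcard : (1 + 2 / β) ^ finrank ℝ E < Fintype.card ι) {p : E} {y : ι → E}
    (hy : ∀ i, y i ≠ p) :
    ∃ i j, i ≠ j ∧ ∃ t ∈ Set.Icc (0 : ℝ) 1,
      ‖y i - ((1 - t) • p + t • y j)‖ ≤ β * ‖p - y i‖ := by
  obtain ⟨i, j, hij, hclose⟩ : ∃ i j, i ≠ j ∧
      dist (NormedSpace.normalize (y i - p)) (NormedSpace.normalize (y j - p)) < β := by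
    by_contra! hsep
    have hunit (i : ι) : NormedSpace.normalize (y i - p) ∈ closedBall 0 1 := by
      rw [mem_closedBall_zero_iff, NormedSpace.norm_normalize (sub_ne_zero.2 (hy i))]
    have hle := card_le_pow_finrank_of_separated hβ zero_le_one hunit fun i j => hsep i j
    rw [mul_one] at hle
    exact hle.not_gt hcard
  wlog hle : ‖y i - p‖ ≤ ‖y j - p‖ generalizing i j
  · exact this j i hij.symm (by rwa [dist_comm]) (le_of_not_ge hle)
  obtain ⟨t, ht, heq⟩ := exists_norm_sub_segment_eq_mul_dist_normalize hle
  exact ⟨i, j, hij, t, ht, heq.trans_le (by gcongr)⟩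

end Segment

section ComparisonAngle

theorem arccos_lt_of_cos_lt {ε z : ℝ} (hε : 0 < ε) (h : Real.cos ε < z) : Real.arccos z < ε := by
  rcases le_total 1 z with hz | hz
  · rwa [Real.arccos_of_one_le hz]
  · by_contra! hle
    have hcos := Real.cos_le_cos_of_nonneg_of_le_pi hε.le (Real.arccos_le_pi z) hle
    rw [Real.cos_arccos ((Real.neg_one_le_cos ε).trans h.le) hz] at hcos
    exact hcos.not_gt h

theorem compAngle_lt_of_dist_le {X : Type*} [MetricSpace X] {p x y z : X} {β ε : ℝ} (hε : 0 < ε)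
    (hβ : 2 * β < 1 - Real.cos ε) (hx : x ≠ p) (hz : dist p z + dist z y = dist p y)
    (hxz : dist x z ≤ β * dist x p) : compAngle p x y < ε := by
  refine arccos_lt_of_cos_lt hε ?_
  have hxp : 0 < dist x p := dist_pos.2 hx
  have hβ0 : 0 ≤ β := nonneg_of_mul_nonneg_left (dist_nonneg.trans hxz) hxp
  have hβ1 : β < 1 := by linarith [Real.neg_one_le_cos ε]
  have hpz : (1 - β) * dist x p ≤ dist p z := by
    linarith [dist_triangle_right x p z]
  have hyp : 0 < dist y p := by
    rw [dist_comm y p, ← hz]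
    exact add_pos_of_pos_of_nonneg ((mul_pos (sub_pos.2 hβ1) hxp).trans_le hpz) dist_nonneg
  have hxy : dist x y ≤ dist y p - (1 - 2 * β) * dist x p := by
    linarith [dist_triangle x z y, dist_comm y p]
  rw [lt_div_iff₀ (by positivity), lt_sub_iff_add_lt]
  calc Real.cos ε * (2 * dist x p * dist y p) + dist x y ^ 2
      < (1 - 2 * β) * (2 * dist x p * dist y p) + dist x y ^ 2 := by
        gcongr
        linarith
    _ ≤ (1 - 2 * β) * (2 * dist x p * dist y p) + (dist y p - (1 - 2 * β) * dist x p) ^ 2 := by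
        gcongr
    _ = dist x p ^ 2 + dist y p ^ 2 - 4 * (β * (1 - β)) * dist x p ^ 2 := by ring
    _ ≤ dist x p ^ 2 + dist y p ^ 2 := by
        have : 0 ≤ β * (1 - β) := mul_nonneg hβ0 (sub_nonneg.2 hβ1.le)
        exact sub_le_self _ (by positivity)

end ComparisonAngle

section Beta

variable {ε : ℝ}

theorem cos_lt_one_of_pos_of_lt_pi (hε0 : 0 < ε) (hεπ : ε < Real.pi) : Real.cos ε < 1 :=
  Real.cos_zero ▸ Real.cos_lt_cos_of_nonneg_of_le_pi le_rfl hεπ.le hε0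

theorem beta_pos (hε0 : 0 < ε) (hεπ : ε < Real.pi) : 0 < beta ε := by
  have hsin := Real.sin_pos_of_pos_of_lt_pi hε0 hεπ
  have hcos := sub_pos.2 (cos_lt_one_of_pos_of_lt_pi hε0 hεπ)
  unfold beta
  positivity

theorem two_mul_beta_lt_one_sub_cos (hε0 : 0 < ε) (hεπ : ε < Real.pi) :
    2 * beta ε < 1 - Real.cos ε := by
  have hsin := Real.sin_pos_of_pos_of_lt_pi hε0 hεπ
  have hcos := sub_pos.2 (cos_lt_one_of_pos_of_lt_pi hε0 hεπ)
  calc 2 * beta ε = (1 - Real.cos ε) * (Real.sin ε / (1 + Real.sin ε)) := by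
        unfold beta
        field
    _ < 1 - Real.cos ε := mul_lt_of_lt_one_right hcos ((div_lt_one (by positivity)).2 (by linarith))

end Beta

/-- The global condition `ATB(ε)` with constant `L`: among any `L` points other than `p`, two
distinct indices have comparison angle at `p` less than `ε`. -/
def IsGloballyATB (X : Type*) [MetricSpace X] (ε : ℝ) (L : ℕ) : Prop :=
  ∀ (p : X) (y : Fin L → X), (∀ i, y i ≠ p) → ∃ i j, i ≠ j ∧ compAngle p (y i) (y j) < ε

/-- The condition `ATB*(ε)` at every point, with constants `L` and `R = ∞`, for the bicombing by
straight segments: among any `L` points other than `p`, one is close to the segment from `p` to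
another. Segments being compact, the bound on the minimal distance is stated as the existence of a
point of the segment, given by its parameter `t`. -/
def IsGloballyATBStar (X : Type*) [NormedAddCommGroup X] [NormedSpace ℝ X] (ε : ℝ) (L : ℕ) : Prop :=
  ∀ (p : X) (y : Fin L → X), (∀ i, y i ≠ p) → ∃ i j, i ≠ j ∧ ∃ t ∈ Set.Icc (0 : ℝ) 1,
    ‖y i - ((1 - t) • p + t • y j)‖ ≤ beta ε * ‖p - y i‖

theorem IsGloballyATBStar.isGloballyATB {X : Type*} [NormedAddCommGroup X] [NormedSpace ℝ X]
    {ε : ℝ} {L : ℕ} (hε0 : 0 < ε) (hεπ : ε < Real.pi) (h : IsGloballyATBStar X ε L) :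
    IsGloballyATB X ε L := by
  intro p y hy
  obtain ⟨i, j, hij, t, ht, hdist⟩ := h p y hy
  have hbtw : Wbtw ℝ p ((1 - t) • p + t • y j) (y j) :=
    ⟨t, ht, AffineMap.lineMap_apply_module p (y j) t⟩
  rw [← dist_eq_norm, ← dist_eq_norm, dist_comm p] at hdist
  exact ⟨i, j, hij, compAngle_lt_of_dist_le hε0 (two_mul_beta_lt_one_sub_cos hε0 hεπ) (hy i)
    hbtw.dist_add_dist hdist⟩

theorem normed_atbStar_and_globalATB_general (n : ℕ) {ε : ℝ} (hε0 : 0 < ε) (hεπ : ε < Real.pi) :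
    ∃ L : ℕ, ∀ (X : Type*) [NormedAddCommGroup X] [NormedSpace ℝ X],
      FiniteDimensional ℝ X → Module.finrank ℝ X = n →
        IsGloballyATBStar X ε L ∧ IsGloballyATB X ε L := by
  obtain ⟨L, hL⟩ := exists_nat_gt ((1 + 2 / beta ε) ^ n)
  refine ⟨L, fun X _ _ _ hn => ?_⟩
  have hstar : IsGloballyATBStar X ε L := fun p y hy =>
    exists_ne_norm_sub_segment_le (beta_pos hε0 hεπ) (by rwa [hn, Fintype.card_fin]) hy
  exact ⟨hstar, hstar.isGloballyATB hε0 hεπ⟩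

/-- For every `n` and `0 < ε < π/2` there is `L_N = L_N(n, ε)` such that every point
`p` of any `n`-dimensional real normed space satisfies the `ATB*(ε)` condition with
respect to the linear quasi-bicombing with constants `L_N` and `R = ∞`; in particular
every `n`-dimensional normed space is globally `ATB(ε)` with constant `L_N`. -/
theorem normed_atbStar_and_globalATB (n : ℕ) (ε : ℝ) (hε0 : 0 < ε) (hε : ε < Real.pi / 2) :
    ∃ L : ℕ, ∀ (X : Type) [NormedAddCommGroup X] [NormedSpace ℝ X],
      FiniteDimensional ℝ X → Module.finrank ℝ X = n →
      ((∀ (p : X) (y : Fin L → X), (∀ i, y i ≠ p) →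
          ∃ i j, i ≠ j ∧ ∃ t ∈ Set.Icc (0 : ℝ) 1,
            ‖y i - ((1 - t) • p + t • y j)‖ ≤ beta ε * ‖p - y i‖) ∧
        (∀ (p : X) (y : Fin L → X), (∀ i, y i ≠ p) →
          ∃ i j, i ≠ j ∧ compAngle p (y i) (y j) < ε)) :=
  normed_atbStar_and_globalATB_general n hε0 (by linarith [Real.pi_pos])
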